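/- arXiv:2501.15291 — 5 statements merged into one kernel-verified Lean document; each statement's English description precedes it below -/
import Mathlib

section
/- For every n ∈ ℕ and every y ∈ ℝ, ∫_ℝ e^{ixy} H_n(x) e^{−x²/2} dx = √(2π) · iⁿ · e^{−y²/2} · H_n(y). -/
open MeasureTheory Polynomial

/-- The physicists' Hermite polynomials: `H 0 = 1`, `H (n+1) = 2x·H n − (H n)'`. -/
noncomputable def hermiteH : ℕ → Polynomial ℝ
  | 0 => 1
  | n + 1 => 2 * X * hermiteH n - derivative (hermiteH n)

lemma hermiteH_succ (n : ℕ) :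
    hermiteH (n + 1) = 2 * X * hermiteH n - derivative (hermiteH n) := by
  rw [hermiteH]

lemma hermiteH_deriv (n : ℕ) :
    derivative (hermiteH (n + 1)) = 2 * ((n : Polynomial ℝ) + 1) * hermiteH n := by
  induction n with
  | zero => simp [hermiteH]
  | succ k ih =>
    have e := hermiteH_succ k
    rw [hermiteH_succ (k + 1), derivative_sub, ih]
    simp only [derivative_mul, derivative_X, derivative_ofNat, derivative_natCast, derivative_add,
      derivative_one, ih]
    push_cast
    linear_combination -2 * ((k : Polynomial ℝ) + 1) * e

noncomputable def hfun (y : ℝ) (p : Polynomial ℝ) (x : ℝ) : ℂ :=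
  Complex.exp (Complex.I * x * y) * ((p.eval x : ℝ) : ℂ) * ((Real.exp (-x ^ 2 / 2) : ℝ) : ℂ)

lemma poly_gauss_integrable (p : Polynomial ℝ) :
    Integrable (fun x : ℝ => p.eval x * Real.exp (-x ^ 2 / 2)) := by
  induction p using Polynomial.induction_on' with
  | add p q hp hq =>
    refine (hp.add hq).congr (Filter.Eventually.of_forall fun x => ?_)
    simp [add_mul]
  | monomial n a =>
    have h := (integrable_rpow_mul_exp_neg_mul_sq (b := 1 / 2) (by norm_num) (s := (n : ℝ))
      (by linarith [(Nat.cast_nonneg n : (0 : ℝ) ≤ n)])).const_mul a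
    refine h.congr (Filter.Eventually.of_forall fun x => ?_)
    simp only [eval_monomial, Real.rpow_natCast]
    rw [show -(1 / 2 : ℝ) * x ^ 2 = -x ^ 2 / 2 by ring]
    ring

lemma hfun_integrable (y : ℝ) (p : Polynomial ℝ) : Integrable (hfun y p) := by
  have h := (poly_gauss_integrable p).ofReal (𝕜 := ℂ)
  refine h.mono ?_ (Filter.Eventually.of_forall fun x => ?_)
  · apply Continuous.aestronglyMeasurable
    unfold hfun
    fun_prop
  · have : ‖Complex.exp (Complex.I * x * y)‖ = 1 := by
      rw [Complex.norm_exp]; simp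
    unfold hfun
    rw [norm_mul, norm_mul, this]
    simp

lemma hfun_deriv (y : ℝ) (p : Polynomial ℝ) (x : ℝ) :
    HasDerivAt (hfun y p)
      (Complex.I * y * hfun y p x + hfun y (derivative p) x - hfun y (X * p) x) x := by
  have h1 : HasDerivAt (fun x : ℝ => Complex.exp (Complex.I * x * y))
      (Complex.exp (Complex.I * x * y) * (Complex.I * 1 * y)) x :=
    (((Complex.ofRealCLM.hasDerivAt (x := x)).const_mul Complex.I).mul_const (y : ℂ)).cexp
  have h2 := (p.hasDerivAt x).ofReal_comp
  have h3 : HasDerivAt (fun x : ℝ => ((Real.exp (-x ^ 2 / 2) : ℝ) : ℂ))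
      ((Real.exp (-x ^ 2 / 2) * (-x) : ℝ) : ℂ) x := by
    apply HasDerivAt.ofReal_comp
    apply HasDerivAt.exp
    convert! ((hasDerivAt_pow 2 x).neg.div_const 2) using 1
    norm_num
    ring
  convert! (h1.mul h2).mul h3 using 1
  simp only [hfun, eval_mul, eval_X, Pi.mul_apply]
  push_cast
  ring

lemma hfun_rec (y : ℝ) (p : Polynomial ℝ) :
    ∫ x, hfun y (X * p) x = Complex.I * y * (∫ x, hfun y p x) + ∫ x, hfun y (derivative p) x := by
  have i1 := (hfun_integrable y p).const_mul (Complex.I * y)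
  have i2 := hfun_integrable y (derivative p)
  have i3 := hfun_integrable y (X * p)
  have h := integral_eq_zero_of_hasDerivAt_of_integrable (hfun_deriv y p)
    ((i1.add i2).sub i3) (hfun_integrable y p)
  have h' := integral_sub (i1.add i2) i3
  simp only [Pi.add_apply] at h'
  rw [h', integral_add i1 i2, integral_const_mul] at h
  linear_combination -h

lemma hfun_step (y : ℝ) (n : ℕ) :
    ∫ x, hfun y (hermiteH (n + 1)) x = 2 * Complex.I * y * (∫ x, hfun y (hermiteH n) x)
      + ∫ x, hfun y (derivative (hermiteH n)) x := by
  have e : ∀ x, hfun y (hermiteH (n + 1)) x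
      = 2 * hfun y (X * hermiteH n) x - hfun y (derivative (hermiteH n)) x := by
    intro x
    simp only [hfun, hermiteH_succ, eval_sub, eval_mul, eval_X, eval_ofNat]
    push_cast
    ring
  simp_rw [e]
  rw [integral_sub ((hfun_integrable _ _).const_mul _) (hfun_integrable _ _), integral_const_mul,
    hfun_rec]
  ring

lemma hfun_zero (y : ℝ) :
    ∫ x, hfun y 1 x = ((Real.sqrt (2 * Real.pi) : ℝ) : ℂ) * ((Real.exp (-y ^ 2 / 2) : ℝ) : ℂ) := by
  have h := fourierIntegral_gaussian (b := 1 / 2) (by norm_num) (y : ℂ)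
  have e : ∀ x : ℝ, hfun y 1 x
      = Complex.exp (Complex.I * y * x) * Complex.exp (-(1 / 2) * x ^ 2) := by
    intro x
    simp only [hfun, eval_one]
    push_cast
    rw [mul_one]
    congr 2 <;> ring
  simp_rw [e]
  rw [h]
  congr 1
  · rw [Real.sqrt_eq_rpow, Complex.ofReal_cpow (by positivity)]
    push_cast
    congr 1
    ring
  · push_cast
    congr 1
    ring

lemma hfun_main (y : ℝ) (n : ℕ) :
    ∫ x, hfun y (hermiteH n) x = ((Real.sqrt (2 * Real.pi) : ℝ) : ℂ) * Complex.I ^ n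
          * ((Real.exp (-y ^ 2 / 2) : ℝ) : ℂ) * (((hermiteH n).eval y : ℝ) : ℂ) := by
  induction n using Nat.twoStepInduction with
  | zero => simpa [hermiteH] using hfun_zero y
  | one =>
    rw [hfun_step]
    simp only [hermiteH, derivative_one]
    rw [hfun_zero]
    simp [hfun]
    ring
  | more n h0 h1 =>
    have e : ∀ x, hfun y (derivative (hermiteH (n + 1))) x
        = (2 * ((n : ℂ) + 1)) * hfun y (hermiteH n) x := by
      intro x
      simp only [hfun, hermiteH_deriv, eval_mul, eval_add, eval_natCast, eval_one, eval_ofNat]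
      push_cast
      ring
    rw [hfun_step]
    simp_rw [e]
    rw [integral_const_mul, h0, h1, hermiteH_succ (n + 1), hermiteH_deriv]
    simp only [eval_sub, eval_mul, eval_X, eval_add, eval_natCast, eval_one, eval_ofNat]
    push_cast
    rw [show Complex.I ^ (n + 2) = -Complex.I ^ n by
      rw [pow_add, Complex.I_sq]; ring, pow_succ Complex.I n]
    linear_combination (2 * y * ((Real.sqrt (2 * Real.pi) : ℝ) : ℂ) * Complex.I ^ n
      * Complex.exp (-(y : ℂ) ^ 2 / 2) * (((hermiteH (n + 1)).eval y : ℝ) : ℂ)) * Complex.I_mul_I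

/-- `∫ e^{ixy} H_n(x) e^{-x²/2} dx = √(2π) iⁿ e^{-y²/2} H_n(y)`. -/
theorem hermite_fourier_integral (n : ℕ) (y : ℝ) :
    ∫ x : ℝ, Complex.exp (Complex.I * x * y)
        * (((hermiteH n).eval x : ℝ) : ℂ) * ((Real.exp (-x ^ 2 / 2) : ℝ) : ℂ)
      = ((Real.sqrt (2 * Real.pi) : ℝ) : ℂ) * Complex.I ^ n
          * ((Real.exp (-y ^ 2 / 2) : ℝ) : ℂ) * (((hermiteH n).eval y : ℝ) : ℂ) := by
  exact hfun_main y n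
end

section
/- For all x, y ∈ ℝ and all real z with |z| < 1/2, the series ∑_{n=0}^∞ (zⁿ/n!)·H_n(x)·H_n(y) converges and its sum equals (1 − 4z²)^{−1/2} · exp( y² − (y − 2zx)²/(1 − 4z²) ) (Mehler's formula). -/
open Polynomial Filter Topology

open MeasureTheory

lemma hermiteH_derivative (n : ℕ) :
    derivative (hermiteH (n + 1)) = 2 * ((n : ℝ[X]) + 1) * hermiteH n := by
  induction n with
  | zero => simp [hermiteH]
  | succ k ih =>
    have h2 : derivative (2 : ℝ[X]) = 0 := by
      simpa using (derivative_natCast (R := ℝ) (n := 2))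
    have h3 : derivative (derivative (hermiteH (k + 1)))
        = 2 * ((k : ℝ[X]) + 1) * derivative (hermiteH k) := by
      rw [ih]
      simp [derivative_mul, h2]
    rw [hermiteH, derivative_sub, h3]
    simp only [derivative_mul, h2, derivative_X, ih]
    push_cast
    have h4 : hermiteH (k + 1) = 2 * X * hermiteH k - derivative (hermiteH k) := rfl
    linear_combination (-2 * ((k : ℝ[X]) + 1)) * h4

lemma hermiteH_rec (n : ℕ) (x : ℝ) :
    (hermiteH (n + 2)).eval x
      = 2 * x * (hermiteH (n + 1)).eval x - 2 * ((n : ℝ) + 1) * (hermiteH n).eval x := by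
  rw [hermiteH, hermiteH_derivative]
  simp

noncomputable def mehlerW (x t : ℝ) : ℂ := 2 * ((x : ℂ) + t * Complex.I)

lemma mehlerW_norm_le (x t : ℝ) : ‖mehlerW x t‖ ≤ 2 * |x| + 2 * |t| := by
  unfold mehlerW
  rw [norm_mul]
  have := norm_add_le (x : ℂ) (t * Complex.I)
  simp at this ⊢
  linarith

lemma mehlerW_norm_sq (x t : ℝ) : ‖mehlerW x t‖ ^ 2 = 4 * (x ^ 2 + t ^ 2) := by
  unfold mehlerW
  rw [norm_mul, mul_pow, ← Complex.normSq_eq_norm_sq (_ + _), Complex.normSq_add_mul_I]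
  norm_num

lemma mehlerW_cont (x : ℝ) : Continuous (mehlerW x) := by
  unfold mehlerW; fun_prop

lemma mehlerW_integrable (x : ℝ) (n : ℕ) :
    Integrable (fun t : ℝ => mehlerW x t ^ n * Complex.exp (-(t : ℂ) ^ 2)) := by
  have hg : Integrable (fun t : ℝ =>
      (n.factorial * Real.exp (2 * |x| + 2)) * Real.exp (-(1 / 2) * t ^ 2)) :=
    (integrable_exp_neg_mul_sq (by norm_num : (0 : ℝ) < 1 / 2)).const_mul _
  refine hg.mono' ?_ (Filter.Eventually.of_forall fun t => ?_)
  · have := mehlerW_cont x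
    exact Continuous.aestronglyMeasurable (by fun_prop)
  · rw [norm_mul, norm_pow, Complex.norm_exp]
    have h1 : ‖mehlerW x t‖ ^ n ≤ n.factorial * Real.exp (‖mehlerW x t‖) := by
      have := Real.pow_div_factorial_le_exp _ (norm_nonneg (mehlerW x t)) n
      rwa [div_le_iff₀ (by positivity), mul_comm] at this
    have h2 : (-(t : ℂ) ^ 2).re = - t ^ 2 := by
      rw [← Complex.ofReal_pow, ← Complex.ofReal_neg, Complex.ofReal_re]
    rw [h2]
    have h3 : ‖mehlerW x t‖ + - t ^ 2 ≤ (2 * |x| + 2) + -(1 / 2) * t ^ 2 := by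
      have := mehlerW_norm_le x t
      nlinarith [sq_nonneg (|t| - 2), sq_abs t]
    calc _ ≤ n.factorial * Real.exp (‖mehlerW x t‖) * Real.exp (-t ^ 2) := by gcongr
      _ = n.factorial * Real.exp (‖mehlerW x t‖ + - t ^ 2) := by rw [Real.exp_add]; ring
      _ ≤ n.factorial * Real.exp ((2 * |x| + 2) + -(1 / 2) * t ^ 2) := by gcongr
      _ = _ := by rw [Real.exp_add]; ring

noncomputable def mehlerI (x : ℝ) (n : ℕ) : ℂ :=
  ∫ t : ℝ, mehlerW x t ^ n * Complex.exp (-(t : ℂ) ^ 2)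

/-- derivative of `w^n e^{-t²}`. -/
lemma mehlerW_hasDerivAt (x : ℝ) (n : ℕ) (t : ℝ) :
    HasDerivAt (fun t : ℝ => mehlerW x t ^ n * Complex.exp (-(t : ℂ) ^ 2))
      ((n * mehlerW x t ^ (n - 1) * (2 * Complex.I)) * Complex.exp (-(t : ℂ) ^ 2)
        + mehlerW x t ^ n * (Complex.exp (-(t : ℂ) ^ 2) * (-(2 * t)))) t := by
  have h0 : HasDerivAt (fun t : ℝ => (t : ℂ)) 1 t := Complex.ofRealCLM.hasDerivAt
  have h1 : HasDerivAt (mehlerW x) (2 * Complex.I) t := by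
    unfold mehlerW
    simpa using ((h0.mul_const Complex.I).const_add (x : ℂ)).const_mul 2
  have h2 : HasDerivAt (fun t : ℝ => -(t : ℂ) ^ 2) (-(2 * t)) t := by
    have := (h0.pow 2).neg
    simp only [Nat.cast_ofNat, Nat.add_one_sub_one, pow_one, mul_one] at this
    exact this
  exact (h1.pow n).mul h2.cexp

lemma mehlerI_rec' (x : ℝ) (n : ℕ) :
    mehlerI x (n + 1) = 2 * x * mehlerI x n - 2 * n * mehlerI x (n - 1) := by
  have key : ∀ t : ℝ, (n * mehlerW x t ^ (n - 1) * (2 * Complex.I)) * Complex.exp (-(t : ℂ) ^ 2)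
        + mehlerW x t ^ n * (Complex.exp (-(t : ℂ) ^ 2) * (-(2 * t)))
      = (2 * n * Complex.I) * (mehlerW x t ^ (n - 1) * Complex.exp (-(t : ℂ) ^ 2))
        + (Complex.I * (mehlerW x t ^ (n + 1) * Complex.exp (-(t : ℂ) ^ 2))
        + (- (2 * x * Complex.I)) * (mehlerW x t ^ n * Complex.exp (-(t : ℂ) ^ 2))) := by
    intro t
    have : -(2 * (t : ℂ)) = Complex.I * mehlerW x t - 2 * x * Complex.I := by
      unfold mehlerW
      linear_combination (-2 * (t : ℂ)) * Complex.I_sq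
    rw [this, pow_succ]; ring
  have i1 := (mehlerW_integrable x (n - 1)).const_mul (2 * n * Complex.I)
  have i2 := (mehlerW_integrable x (n + 1)).const_mul Complex.I
  have i3 := (mehlerW_integrable x n).const_mul (-(2 * x * Complex.I))
  have h := integral_eq_zero_of_hasDerivAt_of_integrable (mehlerW_hasDerivAt x n)
    (by simp_rw [key]; exact i1.add (i2.add i3)) (mehlerW_integrable x n)
  simp_rw [key] at h
  have i23 : Integrable (fun t : ℝ =>
      Complex.I * (mehlerW x t ^ (n + 1) * Complex.exp (-(t : ℂ) ^ 2))
        + (- (2 * x * Complex.I)) * (mehlerW x t ^ n * Complex.exp (-(t : ℂ) ^ 2))) := i2.add i3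
  rw [integral_add i1 i23, integral_add i2 i3, integral_const_mul, integral_const_mul,
    integral_const_mul] at h
  change 2 * n * Complex.I * mehlerI x (n - 1) + (Complex.I * mehlerI x (n + 1)
    + -(2 * x * Complex.I) * mehlerI x n) = 0 at h
  have hI : Complex.I * (2 * n * mehlerI x (n - 1) + mehlerI x (n + 1)
    - 2 * x * mehlerI x n) = 0 := by linear_combination h
  have := (mul_eq_zero.mp hI).resolve_left Complex.I_ne_zero
  linear_combination this

lemma mehlerI_zero (x : ℝ) : mehlerI x 0 = (Real.sqrt Real.pi : ℂ) := by
  have := integral_gaussian 1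
  unfold mehlerI
  have h : ∀ t : ℝ, mehlerW x t ^ 0 * Complex.exp (-(t : ℂ) ^ 2)
      = ((Real.exp (-1 * t ^ 2) : ℝ) : ℂ) := by
    intro t; push_cast; simp
  simp_rw [h]
  rw [integral_complex_ofReal, this]
  simp

lemma mehlerI_eq (x : ℝ) (n : ℕ) :
    mehlerI x n = (Real.sqrt Real.pi : ℂ) * ((hermiteH n).eval x : ℝ) := by
  induction n using Nat.strong_induction_on with
  | _ n ih =>
    match n, ih with
    | 0, _ => simp [mehlerI_zero, hermiteH]
    | 1, _ =>
      rw [mehlerI_rec', mehlerI_zero]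
      simp [hermiteH]; ring
    | m + 2, ih =>
      rw [mehlerI_rec', ih (m + 1) (by omega), Nat.add_sub_cancel, ih m (by omega), hermiteH_rec]
      push_cast; ring

/-- The two-dimensional integrand. -/
noncomputable def mehlerF (x y z : ℝ) (p : ℝ × ℝ) : ℂ :=
  Complex.exp (z * (mehlerW x p.1 * mehlerW y p.2))
    * (Complex.exp (-(p.1 : ℂ) ^ 2) * Complex.exp (-(p.2 : ℂ) ^ 2))

lemma mehler_bound_integrable (x y z : ℝ) (hz : |z| < 1 / 2) :
    Integrable (fun p : ℝ × ℝ => Real.exp (|z| * (‖mehlerW x p.1‖ * ‖mehlerW y p.2‖))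
      * (Real.exp (- p.1 ^ 2) * Real.exp (- p.2 ^ 2))) := by
  have hb : 0 < 1 - 2 * |z| := by linarith
  have hg := ((integrable_exp_neg_mul_sq hb).mul_prod (integrable_exp_neg_mul_sq hb)).const_mul
    (Real.exp (2 * |z| * (x ^ 2 + y ^ 2)))
  refine hg.mono' ?_ (Filter.Eventually.of_forall fun p => ?_)
  · have h1 := mehlerW_cont x
    have h2 := mehlerW_cont y
    exact Continuous.aestronglyMeasurable (by fun_prop)
  · rw [Real.norm_of_nonneg (by positivity), ← Real.exp_add, ← Real.exp_add, ← Real.exp_add,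
      ← Real.exp_add]
    apply Real.exp_le_exp.mpr
    have h1 := mehlerW_norm_sq x p.1
    have h2 := mehlerW_norm_sq y p.2
    have h3 : ‖mehlerW x p.1‖ * ‖mehlerW y p.2‖ ≤ 2 * (x ^ 2 + p.1 ^ 2 + y ^ 2 + p.2 ^ 2) := by
      nlinarith [sq_nonneg (‖mehlerW x p.1‖ - ‖mehlerW y p.2‖)]
    have h4 := mul_le_mul_of_nonneg_left h3 (abs_nonneg z)
    nlinarith

lemma mehlerF_integrable (x y z : ℝ) (hz : |z| < 1 / 2) : Integrable (mehlerF x y z) := by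
  have h1 := mehlerW_cont x
  have h2 := mehlerW_cont y
  refine (mehler_bound_integrable x y z hz).mono' ?_ (Filter.Eventually.of_forall fun p => ?_)
  · unfold mehlerF
    exact Continuous.aestronglyMeasurable (by fun_prop)
  · unfold mehlerF
    have h2 : ∀ t : ℝ, ‖Complex.exp (-(t : ℂ) ^ 2)‖ = Real.exp (- t ^ 2) := by
      intro t
      rw [Complex.norm_exp, ← Complex.ofReal_pow, ← Complex.ofReal_neg, Complex.ofReal_re]
    rw [norm_mul, norm_mul, h2, h2]
    gcongr
    refine (Complex.norm_exp_le_exp_norm _).trans (le_of_eq ?_)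
    simp

lemma mehler_hasSum_integral (x y z : ℝ) (hz : |z| < 1 / 2) :
    HasSum (fun n : ℕ => ((z : ℂ) ^ n / n.factorial) * (mehlerI x n * mehlerI y n))
      (∫ p, mehlerF x y z p) := by
  have c1 := mehlerW_cont x
  have c2 := mehlerW_cont y
  have h2 : ∀ t : ℝ, ‖Complex.exp (-(t : ℂ) ^ 2)‖ = Real.exp (- t ^ 2) := by
    intro t
    rw [Complex.norm_exp, ← Complex.ofReal_pow, ← Complex.ofReal_neg, Complex.ofReal_re]
  have hB : ∀ p : ℝ × ℝ, HasSum (fun n : ℕ =>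
      ((|z| * (‖mehlerW x p.1‖ * ‖mehlerW y p.2‖)) ^ n / n.factorial)
        * (Real.exp (- p.1 ^ 2) * Real.exp (- p.2 ^ 2)))
      (Real.exp (|z| * (‖mehlerW x p.1‖ * ‖mehlerW y p.2‖))
      * (Real.exp (- p.1 ^ 2) * Real.exp (- p.2 ^ 2))) := by
    intro p
    have h : ∀ a : ℝ, HasSum (fun n : ℕ => a ^ n / n.factorial) (Real.exp a) := by
      intro a
      rw [Real.exp_eq_exp_ℝ]
      exact NormedSpace.expSeries_div_hasSum_exp a
    exact (h _).mul_right _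
  have hS : ∀ p : ℝ × ℝ, HasSum (fun n : ℕ =>
      ((z * (mehlerW x p.1 * mehlerW y p.2)) ^ n / n.factorial)
        * (Complex.exp (-(p.1 : ℂ) ^ 2) * Complex.exp (-(p.2 : ℂ) ^ 2))) (mehlerF x y z p) := by
    intro p
    unfold mehlerF
    have h : ∀ a : ℂ, HasSum (fun n : ℕ => a ^ n / n.factorial) (Complex.exp a) := by
      intro a
      rw [Complex.exp_eq_exp_ℂ]
      exact NormedSpace.expSeries_div_hasSum_exp a
    exact (h _).mul_right _
  have main := hasSum_integral_of_dominated_convergence (μ := (volume : Measure (ℝ × ℝ)))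
    (F := fun (n : ℕ) (p : ℝ × ℝ) => ((z * (mehlerW x p.1 * mehlerW y p.2)) ^ n / n.factorial)
        * (Complex.exp (-(p.1 : ℂ) ^ 2) * Complex.exp (-(p.2 : ℂ) ^ 2)))
    (f := mehlerF x y z)
    (fun (n : ℕ) (p : ℝ × ℝ) => ((|z| * (‖mehlerW x p.1‖ * ‖mehlerW y p.2‖)) ^ n / n.factorial)
        * (Real.exp (- p.1 ^ 2) * Real.exp (- p.2 ^ 2)))
    (fun n => Continuous.aestronglyMeasurable (by fun_prop))
    (fun n => Filter.Eventually.of_forall fun p => by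
      rw [norm_mul, norm_mul, h2, h2]; simp)
    (Filter.Eventually.of_forall fun p => (hB p).summable)
    (by
      simp_rw [fun p => (hB p).tsum_eq]
      exact mehler_bound_integrable x y z hz)
    (Filter.Eventually.of_forall fun p => hS p)
  refine (congrArg (fun g => HasSum g (∫ p, mehlerF x y z p)) (funext fun n => ?_)).mpr main
  unfold mehlerI
  rw [Measure.volume_eq_prod, ← integral_prod_mul, ← integral_const_mul]
  congr 1
  ext p
  rw [mul_pow, mul_pow]
  ring

lemma mehler_integral (x y z : ℝ) (hz : |z| < 1 / 2) :
    ∫ p, mehlerF x y z p = ((Real.pi * ((Real.sqrt (1 - 4 * z ^ 2))⁻¹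
        * Real.exp (y ^ 2 - (y - 2 * z * x) ^ 2 / (1 - 4 * z ^ 2))) : ℝ) : ℂ) := by
  have hA : 0 < 1 - 4 * z ^ 2 := by
    have := abs_lt.mp hz
    nlinarith
  have hA' : (1 - 4 * (z : ℂ) ^ 2) ≠ 0 := by exact_mod_cast hA.ne'
  rw [Measure.volume_eq_prod, integral_prod _ (by
    rw [← Measure.volume_eq_prod]; exact mehlerF_integrable x y z hz)]
  have h1 : ∀ t : ℝ, ∫ s : ℝ, mehlerF x y z (t, s) = ((Real.pi : ℂ) ^ (1 / 2 : ℂ)) *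
      Complex.exp ((-(1 - 4 * (z : ℂ) ^ 2)) * (t : ℂ) ^ 2
        + (4 * z * y * Complex.I - 8 * z ^ 2 * x * Complex.I) * t
        + (4 * z * y * x - 4 * z ^ 2 * x ^ 2)) := by
    intro t
    have := integral_cexp_quadratic (b := -1) (by simp) (2 * z * mehlerW x t * Complex.I)
      (2 * z * mehlerW x t * y - (t : ℂ) ^ 2)
    calc _ = _ := ?_
      _ = _ := this
      _ = _ := ?_
    · congr 1; ext s
      unfold mehlerF
      rw [← Complex.exp_add, ← Complex.exp_add]
      congr 1
      simp only [mehlerW]; ring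
    · rw [neg_neg, div_one]
      congr 2
      simp only [mehlerW]
      ring_nf
      simp only [Complex.I_sq, Complex.I_pow_three, Complex.I_pow_four]
      ring
  simp_rw [h1]
  rw [integral_const_mul, integral_cexp_quadratic (by
    rw [Complex.neg_re]
    have : (1 - 4 * (z : ℂ) ^ 2) = ((1 - 4 * z ^ 2 : ℝ) : ℂ) := by push_cast; rfl
    rw [this, Complex.ofReal_re]; linarith)]
  have hs : ∀ r : ℝ, 0 ≤ r → (r : ℂ) ^ (1 / 2 : ℂ) = ((Real.sqrt r : ℝ) : ℂ) := by
    intro r hr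
    rw [Real.sqrt_eq_rpow, Complex.ofReal_cpow hr]
    norm_num
  have e1 : (Real.pi : ℂ) / - -(1 - 4 * (z : ℂ) ^ 2) = ((Real.pi / (1 - 4 * z ^ 2) : ℝ) : ℂ) := by
    push_cast; rw [neg_neg]
  rw [e1, hs _ Real.pi_pos.le, hs _ (by positivity), Real.sqrt_div Real.pi_pos.le]
  have e2 : (4 * (z : ℂ) * y * x - 4 * z ^ 2 * x ^ 2)
      - (4 * z * y * Complex.I - 8 * z ^ 2 * x * Complex.I) ^ 2 / (4 * -(1 - 4 * (z : ℂ) ^ 2))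
      = ((y ^ 2 - (y - 2 * z * x) ^ 2 / (1 - 4 * z ^ 2) : ℝ) : ℂ) := by
    have : (4 * (z : ℂ) * y * Complex.I - 8 * z ^ 2 * x * Complex.I) ^ 2
        = - (4 * z * y - 8 * z ^ 2 * x) ^ 2 := by
      linear_combination (4 * (z : ℂ) * y - 8 * z ^ 2 * x) ^ 2 * Complex.I_sq
    rw [this]
    push_cast
    field_simp
    ring
  rw [e2, ← Complex.ofReal_exp, ← Complex.ofReal_mul, ← Complex.ofReal_mul]
  congr 1
  have := Real.mul_self_sqrt Real.pi_pos.le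
  rw [div_eq_mul_inv]
  linear_combination ((Real.sqrt (1 - 4 * z ^ 2))⁻¹
        * Real.exp (y ^ 2 - (y - 2 * z * x) ^ 2 / (1 - 4 * z ^ 2))) * this

/-- Mehler's formula: for `|z| < 1/2`,
`∑ (zⁿ/n!) Hₙ(x) Hₙ(y) = (1-4z²)^{-1/2} exp(y² - (y-2zx)²/(1-4z²))`. -/
theorem mehler_formula (x y z : ℝ) (hz : |z| < 1 / 2) :
    HasSum (fun n : ℕ => z ^ n / (n.factorial : ℝ)
        * (hermiteH n).eval x * (hermiteH n).eval y)
      ((Real.sqrt (1 - 4 * z ^ 2))⁻¹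
        * Real.exp (y ^ 2 - (y - 2 * z * x) ^ 2 / (1 - 4 * z ^ 2))) := by
  have h := mehler_hasSum_integral x y z hz
  rw [mehler_integral x y z hz] at h
  have e : (fun n : ℕ => ((z : ℂ) ^ n / n.factorial) * (mehlerI x n * mehlerI y n))
      = fun n : ℕ => ((Real.pi * (z ^ n / (n.factorial : ℝ)
        * (hermiteH n).eval x * (hermiteH n).eval y) : ℝ) : ℂ) := by
    ext n
    rw [mehlerI_eq, mehlerI_eq]
    have hp : (Real.sqrt Real.pi : ℂ) * (Real.sqrt Real.pi : ℂ) = (Real.pi : ℂ) := by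
      exact_mod_cast Real.mul_self_sqrt Real.pi_pos.le
    push_cast
    rw [← hp]
    ring
  rw [e, Complex.hasSum_ofReal] at h
  exact (hasSum_mul_left_iff Real.pi_ne_zero).mp h
end

section
/- Let k, l ∈ ℕ with k + l odd. Then for every n ∈ ℕ, (d^k e_n/dx^k)(0) · (d^l e_n/dx^l)(0) = 0; consequently the series ∑_{n=0}^∞ (d^k e_n/dx^k)(0)·(d^l e_n/dx^l)(0) converges with sum 0 (i.e. the e-product ⟨δ^{(k)}, δ^{(l)}⟩_e of the corresponding derivatives of the Dirac delta equals 0, up to the sign (−1)^{k+l}). -/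
open MeasureTheory Polynomial Filter Topology

/-- The `n`-th Hermite function. -/
noncomputable def hermiteFun (n : ℕ) (x : ℝ) : ℝ :=
  (Real.sqrt (2 ^ n * (n.factorial : ℝ) * Real.sqrt Real.pi))⁻¹
    * (hermiteH n).eval x * Real.exp (-x ^ 2 / 2)

theorem hermiteH_comp_neg (n : ℕ) :
    (hermiteH n).comp (-X) = C ((-1 : ℝ) ^ n) * hermiteH n := by
  induction n with
  | zero => simp [hermiteH]
  | succ n ih =>
    have hd : (derivative (hermiteH n)).comp (-X)
        = - (C ((-1 : ℝ) ^ n) * derivative (hermiteH n)) := by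
      have := congrArg derivative ih
      rw [derivative_comp, derivative_C_mul] at this
      rw [← this]
      simp
    simp only [hermiteH, sub_comp, mul_comp, X_comp, ih, hd, ofNat_comp]
    rw [pow_succ, C_mul, C_neg, C_1]
    ring

theorem hermiteFun_neg (n : ℕ) (x : ℝ) :
    hermiteFun n (-x) = (-1) ^ n * hermiteFun n x := by
  have := congrArg (eval x) (hermiteH_comp_neg n)
  simp only [eval_comp, eval_neg, eval_X, eval_mul, eval_C] at this
  unfold hermiteFun
  rw [this, neg_sq]
  ring

theorem hermiteFun_iteratedDeriv_zero (n k : ℕ) :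
    (-1) ^ n * iteratedDeriv k (hermiteFun n) 0
      = (-1) ^ k * iteratedDeriv k (hermiteFun n) 0 := by
  have h1 := iteratedDeriv_comp_neg k (hermiteFun n) 0
  have h2 : (fun x => hermiteFun n (-x)) = fun x => (-1) ^ n * hermiteFun n x :=
    funext (hermiteFun_neg n)
  rw [h2, iteratedDeriv_const_mul_field] at h1
  simpa using h1

/-- if `k + l` is odd then every term `eₙ^{(k)}(0) · eₙ^{(l)}(0)`
vanishes, so the series defining `⟨δ^{(k)}, δ^{(l)}⟩_e` converges with sum `0`. -/
theorem eProduct_delta_derivatives_odd (k l : ℕ) (h : Odd (k + l)) :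
    (∀ n : ℕ, iteratedDeriv k (hermiteFun n) 0 * iteratedDeriv l (hermiteFun n) 0 = 0) ∧
    HasSum (fun n : ℕ =>
      iteratedDeriv k (hermiteFun n) 0 * iteratedDeriv l (hermiteFun n) 0) 0 := by
  have key : ∀ n : ℕ,
      iteratedDeriv k (hermiteFun n) 0 * iteratedDeriv l (hermiteFun n) 0 = 0 := by
    intro n
    have hk := hermiteFun_iteratedDeriv_zero n k
    have hl := hermiteFun_iteratedDeriv_zero n l
    generalize iteratedDeriv k (hermiteFun n) 0 = a at *
    generalize iteratedDeriv l (hermiteFun n) 0 = b at *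
    have h1 : ((-1 : ℝ) ^ n * a) * ((-1) ^ n * b) = a * b := by
      have : (-1 : ℝ) ^ n * (-1) ^ n = 1 := by rw [← mul_pow]; simp
      linear_combination a * b * this
    have h2 : ((-1 : ℝ) ^ k * a) * ((-1) ^ l * b) = - (a * b) := by
      have : (-1 : ℝ) ^ k * (-1) ^ l = -1 := by rw [← pow_add]; exact h.neg_one_pow
      linear_combination a * b * this
    rw [hk, hl, h2] at h1
    linarith
  refine ⟨key, ?_⟩
  simp only [key]
  exact hasSum_zero
end

section
/- The series ∑_{j=0}^∞ (−4)^j · Γ(j + 1/2)² / (2j)! converges and its sum equals π/√2. -/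
open Filter Topology

noncomputable def aA (n : ℕ) : ℝ := (-4 : ℝ) ^ n * (Real.Gamma ((n : ℝ) + 1 / 2)) ^ 2 / ((2 * n).factorial : ℝ)
noncomputable def bB (n : ℕ) : ℝ := (4 : ℝ) ^ n * (Real.Gamma ((n : ℝ) + 1 / 2)) ^ 2 / ((2 * n).factorial : ℝ)

lemma aA_eq (n : ℕ) : aA n = (-1)^n * bB n := by
  unfold aA bB
  rw [show (-4:ℝ) = (-1) * 4 by norm_num, mul_pow]; ring

lemma bB_zero : bB 0 = Real.pi := by
  simp only [bB, Nat.cast_zero, zero_add, Real.Gamma_one_half_eq]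
  simp [Real.sq_sqrt Real.pi_pos.le]

lemma bB_nonneg (n : ℕ) : 0 ≤ bB n := by unfold bB; positivity

lemma bB_succ (n : ℕ) : bB (n+1) = bB n * ((2*n+1)/(2*n+2)) := by
  unfold bB
  rw [show (((n+1:ℕ):ℝ) + 1/2) = ((n:ℝ)+1/2) + 1 by push_cast; ring,
    Real.Gamma_add_one (by positivity), show 2*(n+1) = 2*n+1+1 by ring,
    Nat.factorial_succ, Nat.factorial_succ]
  push_cast
  have : ((2*n).factorial : ℝ) ≠ 0 := by positivity
  field_simp
  ring

lemma bB_anti : Antitone bB := antitone_nat_of_succ_le fun n => by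
  rw [bB_succ]
  apply mul_le_of_le_one_right (bB_nonneg n)
  rw [div_le_one (by positivity)]; linarith

lemma bB_bound (n : ℕ) : bB n ^ 2 * (2*n+1) ≤ Real.pi^2 := by
  induction n with
  | zero => simp [bB_zero]
  | succ n ih =>
    refine le_trans ?_ ih
    rw [bB_succ, mul_pow, mul_assoc]
    apply mul_le_mul_of_nonneg_left _ (sq_nonneg _)
    push_cast
    rw [div_pow, div_mul_eq_mul_div, div_le_iff₀ (by positivity)]
    have : (0:ℝ) ≤ n := by positivity
    nlinarith

lemma bB_tendsto : Tendsto bB atTop (𝓝 0) := by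
  have h : Tendsto (fun n => bB n ^ 2) atTop (𝓝 0) := by
    refine squeeze_zero (g := fun n : ℕ => Real.pi^2 * (1 / ((n:ℝ)+1))) (fun n => sq_nonneg _) (fun n => ?_) ?_
    · rw [mul_one_div, le_div_iff₀ (by positivity)]
      refine le_trans (mul_le_mul_of_nonneg_left ?_ (sq_nonneg _)) (bB_bound n)
      have : (0:ℝ) ≤ n := by positivity
      linarith
    · simpa using tendsto_one_div_add_atTop_nhds_zero_nat.const_mul (Real.pi^2)
  have h2 := h.sqrt
  simpa [Real.sqrt_sq (bB_nonneg _)] using h2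

lemma aA_choose (n : ℕ) : aA n = Real.pi * Ring.choose (-1/2 : ℝ) n := by
  rw [aA_eq]
  induction n with
  | zero => simp [bB_zero]
  | succ n ih =>
    have h : ((n:ℝ)+1) * Ring.choose (-1/2 : ℝ) (n+1) = (-1/2 - n) * Ring.choose (-1/2 : ℝ) n := by
      have := Ring.choose_smul_choose (-1/2 : ℝ) (Nat.le_succ n)
      simp only [Nat.succ_eq_add_one, Nat.choose_succ_self_right, nsmul_eq_mul,
        Nat.add_sub_cancel_left, Ring.choose_one_right] at this
      push_cast at this
      rw [this]; ring
    have h2 : Ring.choose (-1/2 : ℝ) (n+1) = (-1/2 - n) * Ring.choose (-1/2 : ℝ) n / (n+1) := by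
      rw [← h]; field_simp
    rw [h2, bB_succ, pow_succ]
    rw [show Real.pi * ((-1/2 - n) * Ring.choose (-1/2 : ℝ) n / (n+1)) =  (Real.pi * Ring.choose (-1/2 : ℝ) n) * ((-1/2-n)/(n+1)) by ring, ← ih]
    field_simp
    ring

lemma aA_hasSum (x : ℝ) (h0 : 0 < x) (h1 : x < 1) :
    HasSum (fun n => aA n * x ^ n) (Real.pi * (1 + x) ^ (-1/2 : ℝ)) := by
  have := (Real.one_add_rpow_hasFPowerSeriesOnBall_zero (a := -1/2)).hasSum (y := x)
    (by simp [enorm_eq_nnnorm, ← NNReal.coe_lt_coe, abs_of_pos h0, h1])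
  simp only [binomialSeries_apply, zero_add] at this
  have := this.mul_left Real.pi
  have e : (fun n => aA n * x ^ n) =
      fun i => Real.pi * Ring.choose (-1 / 2 : ℝ) i • (List.ofFn fun _ : Fin i => x).prod := by
    funext n
    rw [aA_choose]
    simp [mul_assoc]
  rw [e]
  exact this

/-- the (conditionally convergent) series
`∑ⱼ (-4)ʲ Γ(j+1/2)² / (2j)!` converges to `π/√2`. -/
theorem abel_series_a00 :
    Tendsto (fun N => ∑ j ∈ Finset.range N,
        (-4 : ℝ) ^ j * (Real.Gamma ((j : ℝ) + 1 / 2)) ^ 2 / ((2 * j).factorial : ℝ))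
      atTop (𝓝 (Real.pi / Real.sqrt 2)) := by
  obtain ⟨l, hl⟩ := bB_anti.tendsto_alternating_series_of_tendsto_zero bB_tendsto
  have hl' : Tendsto (fun N => ∑ j ∈ Finset.range N, aA j) atTop (𝓝 l) := by
    simpa only [aA_eq] using hl
  have key := Real.tendsto_tsum_powerSeries_nhdsWithin_lt hl'
  have h2 : Tendsto (fun x : ℝ => Real.pi * (1 + x) ^ (-1/2 : ℝ)) (𝓝[<] 1) (𝓝 (Real.pi * (1 + 1) ^ (-1/2 : ℝ))) := by
    apply Tendsto.mono_left _ nhdsWithin_le_nhds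
    have : ContinuousAt (fun x : ℝ => Real.pi * (1 + x) ^ (-1/2 : ℝ)) 1 := by
      apply ContinuousAt.mul continuousAt_const
      apply ContinuousAt.rpow_const (by fun_prop)
      norm_num
    exact this
  have h3 := h2.congr' (f₂ := fun x => ∑' n, aA n * x ^ n) (by
    filter_upwards [Ioo_mem_nhdsLT (zero_lt_one' ℝ)] with x hx
    exact (aA_hasSum x hx.1 hx.2).tsum_eq.symm)
  have e := tendsto_nhds_unique key h3
  have e2 : l = Real.pi / Real.sqrt 2 := by
    rw [e, show (1:ℝ)+1 = 2 by norm_num, show (-1/2:ℝ) = -(1/2) by norm_num, Real.rpow_neg (by norm_num), Real.sqrt_eq_rpow]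
    rfl
  rw [← e2]
  exact hl'
end

section
/- Consider the real power series S(z) = ∑_{j=0}^∞ ( Γ(j + 3/2)² / (2j+1)! ) · z^j. Its radius of convergence is 4, and S(z) tends to π/(8√2) as z tends to −4 from the right along the interval (−4, 4); i.e., the (divergent) series ∑_{j=0}^∞ (−4)^j·Γ(j+3/2)²/(2j+1)! is Abel summable with Abel sum π/(8√2). -/
open Filter Topology

noncomputable def cf (j : ℕ) : ℝ :=
  (Real.Gamma ((j : ℝ) + 3 / 2)) ^ 2 / ((2 * j + 1).factorial : ℝ)

lemma cf_zero : cf 0 = Real.pi / 4 := by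
  have h : Real.Gamma (3 / 2) = 1 / 2 * Real.sqrt Real.pi := by
    rw [show (3 / 2 : ℝ) = 1 / 2 + 1 by norm_num, Real.Gamma_add_one (by norm_num),
      Real.Gamma_one_half_eq]
  simp only [cf, Nat.cast_zero, zero_add, h, mul_pow, Real.sq_sqrt Real.pi_pos.le]
  norm_num
  ring

lemma cf_succ (j : ℕ) : cf (j + 1) * 4 * (j + 1) = cf j * (j + 3 / 2) := by
  have h : Real.Gamma (((j + 1 : ℕ) : ℝ) + 3 / 2)
      = ((j : ℝ) + 3 / 2) * Real.Gamma ((j : ℝ) + 3 / 2) := by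
    rw [← Real.Gamma_add_one (by positivity)]
    congr 1
    push_cast
    ring
  have hf : ((2 * (j + 1) + 1).factorial : ℝ)
      = (2 * j + 3) * ((2 * j + 2) * ((2 * j + 1).factorial : ℝ)) := by
    rw [show 2 * (j + 1) + 1 = (2 * j + 1) + 1 + 1 by ring, Nat.factorial_succ,
      Nat.factorial_succ]
    push_cast
    ring
  have h0 : ((2 * j + 1).factorial : ℝ) ≠ 0 := by positivity
  have h1 : (2 * (j : ℝ) + 3) ≠ 0 := by positivity
  have h2 : (2 * (j : ℝ) + 2) ≠ 0 := by positivity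
  simp only [cf]
  rw [h, hf]
  field_simp
  ring

lemma mc_succ (j : ℕ) : Ring.multichoose (3 / 2 : ℝ) (j + 1) * (j + 1)
    = Ring.multichoose (3 / 2 : ℝ) j * (j + 3 / 2) := by
  have h1 := Ring.factorial_nsmul_multichoose_eq_ascPochhammer (3 / 2 : ℝ) (j + 1)
  have h2 := Ring.factorial_nsmul_multichoose_eq_ascPochhammer (3 / 2 : ℝ) j
  rw [Polynomial.ascPochhammer_smeval_eq_eval] at h1 h2
  rw [ascPochhammer_succ_eval, ← h2, Nat.factorial_succ] at h1
  simp only [nsmul_eq_mul] at h1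
  push_cast at h1
  have h0 : (j.factorial : ℝ) ≠ 0 := by positivity
  apply mul_left_cancel₀ h0
  linarith

lemma cf_eq (j : ℕ) : cf j * 4 ^ j = Real.pi / 4 * Ring.multichoose (3 / 2 : ℝ) j := by
  induction j with
  | zero => simp [cf_zero]
  | succ k ih =>
    have hk : ((k : ℝ) + 1) ≠ 0 := by positivity
    apply mul_right_cancel₀ hk
    rw [mul_assoc (Real.pi / 4), mc_succ, ← mul_assoc, ← ih]
    have := cf_succ k
    rw [pow_succ]
    linear_combination 4 ^ k * this

lemma cf_ge (j : ℕ) : Real.pi / 4 ≤ cf j * 4 ^ j := by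
  induction j with
  | zero => simp [cf_zero]
  | succ k ih =>
    have hk : (0 : ℝ) < (k : ℝ) + 1 := by positivity
    have h := cf_succ k
    have hp : 0 < cf k * 4 ^ k := lt_of_lt_of_le (by positivity) ih
    refine ih.trans ?_
    refine le_of_mul_le_mul_right ?_ hk
    have : cf (k + 1) * 4 ^ (k + 1) * (k + 1) = cf k * 4 ^ k * (k + 3 / 2) := by
      rw [pow_succ]
      linear_combination 4 ^ k * h
    rw [this]
    gcongr
    norm_num

lemma cf_hasSum (z : ℝ) (hz : |z| < 4) :
    HasSum (fun j => cf j * z ^ j) (Real.pi / 4 * (1 / (1 - z / 4) ^ (3 / 2 : ℝ))) := by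
  have hm : z / 4 ∈ Metric.eball (0 : ℝ) 1 := by
    rw [← ENNReal.ofReal_one, Metric.eball_ofReal]
    simp only [Metric.mem_ball, dist_zero_right, Real.norm_eq_abs, abs_div]
    rw [abs_of_pos (by norm_num : (0 : ℝ) < 4)]
    linarith
  have h := (Real.one_div_one_sub_rpow_hasFPowerSeriesOnBall_zero (3 / 2)).hasSum hm
  have h2 := h.mul_left (Real.pi / 4)
  simp only [zero_add] at h2
  refine Eq.mpr (congrArg (fun f => HasSum f _) (funext fun j => ?_)) h2
  have e := FormalMultilinearSeries.ofScalars_apply_eq (E := ℝ)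
    (fun n : ℕ => Ring.choose ((3 / 2 : ℝ) + n - 1) n) (z / 4) j
  refine Eq.trans ?_ (congrArg (fun t => Real.pi / 4 * t) e.symm)
  simp only [smul_eq_mul]
  rw [← Ring.multichoose_eq, ← mul_assoc, ← cf_eq, div_pow]
  field_simp

/-- the power series `S(z) = ∑ⱼ (Γ(j+3/2)²/(2j+1)!) zʲ` has radius of
convergence `4` (it converges for `|z| < 4` and diverges for `|z| > 4`), and
`S(z) → π/(8√2)` as `z → -4⁺` along `(-4, 4)`: the series at `z = -4` is Abel
summable with Abel sum `π/(8√2)`. -/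
theorem abel_summability_b00 :
    (∀ z : ℝ, |z| < 4 → Summable (fun j : ℕ =>
        (Real.Gamma ((j : ℝ) + 3 / 2)) ^ 2 / ((2 * j + 1).factorial : ℝ) * z ^ j)) ∧
    (∀ z : ℝ, 4 < |z| → ¬ Summable (fun j : ℕ =>
        (Real.Gamma ((j : ℝ) + 3 / 2)) ^ 2 / ((2 * j + 1).factorial : ℝ) * z ^ j)) ∧
    Tendsto (fun z : ℝ => ∑' j : ℕ,
        (Real.Gamma ((j : ℝ) + 3 / 2)) ^ 2 / ((2 * j + 1).factorial : ℝ) * z ^ j)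
      (nhdsWithin (-4) (Set.Ioo (-4) 4))
      (𝓝 (Real.pi / (8 * Real.sqrt 2))) := by
  refine ⟨fun z hz => (cf_hasSum z hz).summable, fun z hz hs => ?_, ?_⟩
  · have h := hs.tendsto_atTop_zero.abs
    have hge : ∀ j : ℕ, Real.pi / 4 ≤ |cf j * z ^ j| := by
      intro j
      have h1 := cf_ge j
      have hc : 0 ≤ cf j := by
        unfold cf
        positivity
      rw [abs_mul, abs_of_nonneg hc, abs_pow]
      refine h1.trans ?_
      gcongr
    have := ge_of_tendsto' h hge
    simp only [abs_zero] at this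
    linarith [Real.pi_pos]
  · have hval : Real.pi / 4 * (1 / (1 - (-4 : ℝ) / 4) ^ (3 / 2 : ℝ))
        = Real.pi / (8 * Real.sqrt 2) := by
      rw [show (1 - (-4 : ℝ) / 4) = 2 by norm_num, show (3 / 2 : ℝ) = 1 + 1 / 2 by norm_num,
        Real.rpow_add (by norm_num), Real.rpow_one, ← Real.sqrt_eq_rpow]
      field_simp
      norm_num
    have hc : ContinuousAt (fun z : ℝ => Real.pi / 4 * (1 / (1 - z / 4) ^ (3 / 2 : ℝ))) (-4) := by
      have h1 : ContinuousAt (fun z : ℝ => (1 - z / 4) ^ (3 / 2 : ℝ)) (-4) :=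
        ContinuousAt.rpow_const (by fun_prop) (Or.inl (by norm_num))
      exact continuousAt_const.mul (continuousAt_const.div h1 (by norm_num))
    rw [← hval]
    refine (hc.tendsto.mono_left nhdsWithin_le_nhds).congr' ?_
    filter_upwards [self_mem_nhdsWithin] with z hz
    exact (cf_hasSum z (abs_lt.2 hz)).tsum_eq.symm
end
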